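/- Fix an integer p ≥ 2 and 0 ≤ α ≤ p−1. Then the Besicovitch set Ē(α) = {x ∈ [0,1] : Ā(x) ≤ α} has Hausdorff dimension h(α) if 0 ≤ α < (p−1)/2, and Hausdorff dimension 1 if (p−1)/2 ≤ α ≤ p−1. -/

import Mathlib

open Filter MeasureTheory Set
open scoped ENNReal

noncomputable section

/-- Number of words of length `n` over the alphabet `{0, …, p-1}` whose digit sum lies
strictly between `n(α-δ)` and `n(α+δ)`; this is `h(α,n,δ)`. -/
def hcount (p n : ℕ) (α δ : ℝ) : ℕ :=
  Nat.card {w : Fin n → Fin p //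
    (n : ℝ) * (α - δ) < ∑ i, ((w i : ℕ) : ℝ) ∧ (∑ i, ((w i : ℕ) : ℝ)) < n * (α + δ)}

/-- The `p`-adic entropy function
`h(α) = lim_{δ→0} limsup_{n→∞} log h(α,n,δ) / (n log p)`.
Since the inner quantity is nondecreasing in `δ`, the limit as `δ → 0⁺` equals the
infimum over `δ > 0`. -/
def entropy (p : ℕ) (α : ℝ) : ℝ :=
  ⨅ δ : {δ : ℝ // 0 < δ},
    limsup (fun n : ℕ => Real.log (hcount p n α δ) / (n * Real.log p)) atTop

/-- Number of words of length `n` over `{0, …, p-1}` with digit sum `< n(α+δ)`;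
this is `h̄(α,n,δ)`. -/
def hbarCount (p n : ℕ) (α δ : ℝ) : ℕ :=
  Nat.card {w : Fin n → Fin p // (∑ i, ((w i : ℕ) : ℝ)) < n * (α + δ)}

/-- The `p`-adic upper entropy function
`h̄(α) = lim_{δ→0} limsup_{n→∞} log h̄(α,n,δ) / (n log p)`, the limit in `δ`
being the infimum over `δ > 0` by monotonicity in `δ`. -/
def upperEntropy (p : ℕ) (α : ℝ) : ℝ :=
  ⨅ δ : {δ : ℝ // 0 < δ},
    limsup (fun n : ℕ => Real.log (hbarCount p n α δ) / (n * Real.log p)) atTop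

/-- Number of words of length `n` over `{0, …, p-1}` with digit sum `> n(α-δ)`;
this is `h̲(α,n,δ)`. -/
def hlowCount (p n : ℕ) (α δ : ℝ) : ℕ :=
  Nat.card {w : Fin n → Fin p // (n : ℝ) * (α - δ) < ∑ i, ((w i : ℕ) : ℝ)}

/-- The `p`-adic lower entropy function
`h̲(α) = lim_{δ→0} liminf_{n→∞} log h̲(α,n,δ) / (n log p)`, the limit in `δ`
being the infimum over `δ > 0` by monotonicity in `δ`. -/
def lowerEntropy (p : ℕ) (α : ℝ) : ℝ :=
  ⨅ δ : {δ : ℝ // 0 < δ},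
    liminf (fun n : ℕ => Real.log (hlowCount p n α δ) / (n * Real.log p)) atTop

/-- The `(n+1)`-th digit `x_{n+1} ∈ {0,…,p-1}` of the non-terminating `p`-adic expansion
`x = 0.x₁x₂x₃…` of `x ∈ [0,1]` (the expansion not ending in all zeros). -/
def padicDigit (p : ℕ) (x : ℝ) (n : ℕ) : ℤ :=
  (⌈x * p ^ (n + 1)⌉ - 1) - p * (⌈x * p ^ n⌉ - 1)

/-- `S_n(T^m x) = x_{m+1} + ⋯ + x_{m+n}`, the digit sum of length `n` after shifting
`m` times. In particular `msum p x 0 n = S_n(x)`. -/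
def msum (p : ℕ) (x : ℝ) (m n : ℕ) : ℤ :=
  ∑ i ∈ Finset.range n, padicDigit p x (m + i)

/-- The `n`-th lower moving digit mean `M̲ₙ(x) = liminf_{m→∞} S_n(T^m x)/n`. -/
def lowerMn (p : ℕ) (x : ℝ) (n : ℕ) : ℝ :=
  liminf (fun m : ℕ => (msum p x m n : ℝ) / n) atTop

/-- The `n`-th upper moving digit mean `M̄ₙ(x) = limsup_{m→∞} S_n(T^m x)/n`. -/
def upperMn (p : ℕ) (x : ℝ) (n : ℕ) : ℝ :=
  limsup (fun m : ℕ => (msum p x m n : ℝ) / n) atTop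

/-- The lower moving digit mean `M̲(x) = lim_{n→∞} M̲ₙ(x)`; the limit exists by
subadditivity, hence equals the `liminf`. -/
def lowerM (p : ℕ) (x : ℝ) : ℝ := liminf (fun n : ℕ => lowerMn p x n) atTop

/-- The upper moving digit mean `M̄(x) = lim_{n→∞} M̄ₙ(x)`; the limit exists by
subadditivity, hence equals the `limsup`. -/
def upperM (p : ℕ) (x : ℝ) : ℝ := limsup (fun n : ℕ => upperMn p x n) atTop

/-- The lower digit mean `A̲(x) = liminf_{n→∞} S_n(x)/n`. -/
def lowerA (p : ℕ) (x : ℝ) : ℝ := liminf (fun n : ℕ => (msum p x 0 n : ℝ) / n) atTop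

/-- The upper digit mean `Ā(x) = limsup_{n→∞} S_n(x)/n`. -/
def upperA (p : ℕ) (x : ℝ) : ℝ := limsup (fun n : ℕ => (msum p x 0 n : ℝ) / n) atTop

/-- The Banach set `B(α,β) = {x ∈ [0,1] : M̲(x) = α, M̄(x) = β}`. -/
def BanachSet (p : ℕ) (α β : ℝ) : Set ℝ :=
  {x | x ∈ Icc (0 : ℝ) 1 ∧ lowerM p x = α ∧ upperM p x = β}

/-- The Besicovitch set `Ē(α) = {x ∈ [0,1] : Ā(x) ≤ α}`. -/
def besicovitchUpper (p : ℕ) (α : ℝ) : Set ℝ :=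
  {x | x ∈ Icc (0 : ℝ) 1 ∧ upperA p x ≤ α}

/-!
Let `D(α) ⊆ Ē(α)` be the set of `x` whose digit mean exists and equals `α`. Covering by `p`-adic
intervals gives `dim_H Ē(α) ≤ h̄(α)` and `dim_H D(α) ≤ h(α)`, and `h ≤ h̄` trivially, so for
`0 ≤ α ≤ (p - 1) / 2` everything rests on `h̄(α) ≤ dim_H D(α)`.

With `Λ t = log ∑ j < p, exp (t j)`, Chernoff's inequality bounds `h̄(α) log p` by `Λ t - t α` for
every `t ≤ 0`. Take the `t ≤ 0` with `Λ' t = α`, and let the digits be independent with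
probabilities `exp (t j - Λ t)`. Their mean is `α`, so this measure lives on `D(α)`, where it gives
the `n`-th level `p`-adic interval at `x` the mass
`exp (t Sₙ(x) - n Λ t) = exp (-n (Λ t - t α + o(1)))`. Billingsley's lemma turns this into
`dim_H D(α) ≥ (Λ t - t α) / log p`, the same exponent. At `t = 0` this is Lebesgue measure, and
`dim_H D((p - 1) / 2) = 1` settles the remaining range of `α`. For `α = 0`, where `t` would have to
be `-∞`, the Chernoff bound tends to `0`.
-/
open ProbabilityTheory
open scoped NNReal Topology

section Digits

variable {p : ℕ}

/-- The `p`-adic interval `((k - 1) / pⁿ, k / pⁿ]` of level `n` that contains `x`. It is closed on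
the right because `padicDigit` reads off non-terminating expansions. -/
def adicInterval (p n : ℕ) (x : ℝ) : Set ℝ :=
  {y | ⌈y * (p : ℝ) ^ n⌉ = ⌈x * (p : ℝ) ^ n⌉}

lemma measurableSet_adicInterval (p n : ℕ) (x : ℝ) : MeasurableSet (adicInterval p n x) :=
  measurableSet_eq_fun (by fun_prop) measurable_const

lemma ceil_mul_pow_succ (p : ℕ) (x : ℝ) (n : ℕ) :
    ⌈x * (p : ℝ) ^ (n + 1)⌉ = p * (⌈x * (p : ℝ) ^ n⌉ - 1) + padicDigit p x n + 1 := by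
  rw [padicDigit]
  ring

lemma padicDigit_mem_Ico [NeZero p] (x : ℝ) (n : ℕ) : padicDigit p x n ∈ Ico (0 : ℤ) p := by
  have hp : (0 : ℝ) < p := Nat.cast_pos.mpr (NeZero.pos p)
  have hceil : p * (⌈x * (p : ℝ) ^ n⌉ - 1) < ⌈x * (p : ℝ) ^ (n + 1)⌉ := by
    rw [Int.lt_ceil, pow_succ', mul_left_comm]
    push_cast
    gcongr
    linarith [Int.ceil_lt_add_one (x * (p : ℝ) ^ n)]
  have hceil' : ⌈x * (p : ℝ) ^ (n + 1)⌉ ≤ p * ⌈x * (p : ℝ) ^ n⌉ := by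
    rw [Int.ceil_le, pow_succ', mul_left_comm]
    push_cast
    gcongr
    exact Int.le_ceil _
  rw [ceil_mul_pow_succ] at hceil hceil'
  constructor <;> linarith

lemma mem_adicInterval_of_padicDigit_eq {x y : ℝ} {n : ℕ} (hxy : ⌈y⌉ = ⌈x⌉)
    (h : ∀ i < n, padicDigit p y i = padicDigit p x i) : y ∈ adicInterval p n x := by
  induction n with
  | zero => simpa [adicInterval] using hxy
  | succ n ih =>
    have hn : ⌈y * (p : ℝ) ^ n⌉ = ⌈x * (p : ℝ) ^ n⌉ := ih fun i hi ↦ h i (hi.trans n.lt_succ_self)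
    rw [adicInterval, mem_ofPred_eq, ceil_mul_pow_succ, ceil_mul_pow_succ, hn, h n n.lt_succ_self]

lemma padicDigit_eq_of_mem_adicInterval [NeZero p] {x y : ℝ} {n : ℕ}
    (h : y ∈ adicInterval p n x) : ∀ i < n, padicDigit p y i = padicDigit p x i := by
  induction n with
  | zero => simp
  | succ n ih =>
    have hdiv (z : ℝ) : ⌈z * (p : ℝ) ^ n⌉ - 1 = (⌈z * (p : ℝ) ^ (n + 1)⌉ - 1) / p := by
      have hz := padicDigit_mem_Ico (p := p) z n
      rw [ceil_mul_pow_succ, add_sub_cancel_right,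
        Int.mul_add_ediv_left _ _ (Nat.cast_ne_zero.mpr (NeZero.ne p)),
        Int.ediv_eq_zero_of_lt hz.1 hz.2, add_zero]
    have hn : y ∈ adicInterval p n x := by
      rw [adicInterval, mem_ofPred_eq, ← sub_left_inj, hdiv, hdiv, h.out]
    intro i hi
    rcases Nat.lt_succ_iff_lt_or_eq.mp hi with hi | rfl
    · exact ih hn i hi
    · rw [padicDigit, padicDigit, h.out, hn.out]

lemma ediam_adicInterval_le [NeZero p] (n : ℕ) (x : ℝ) :
    Metric.ediam (adicInterval p n x) ≤ ENNReal.ofReal ((p : ℝ) ^ n)⁻¹ := by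
  refine Metric.ediam_le fun y hy z hz ↦ ?_
  have hpn : (0 : ℝ) < (p : ℝ) ^ n := pow_pos (Nat.cast_pos.mpr (NeZero.pos p)) n
  obtain ⟨hy₁, hy₂⟩ := Int.ceil_eq_iff.mp hy.out
  obtain ⟨hz₁, hz₂⟩ := Int.ceil_eq_iff.mp hz.out
  rw [edist_dist, Real.dist_eq]
  refine ENNReal.ofReal_le_ofReal ?_
  rw [← one_div, le_div_iff₀ hpn, ← abs_of_pos hpn, ← abs_mul, sub_mul, abs_le]
  constructor <;> linarith

/-- The digit `padicDigit p x n` as an element of the alphabet `Fin p`. -/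
def padicDigitFin (p : ℕ) [NeZero p] (x : ℝ) (n : ℕ) : Fin p :=
  ⟨(padicDigit p x n).toNat, (Int.toNat_lt_of_ne_zero (NeZero.ne p)).mpr (padicDigit_mem_Ico x n).2⟩

lemma coe_padicDigitFin [NeZero p] (x : ℝ) (n : ℕ) :
    ((padicDigitFin p x n : ℕ) : ℤ) = padicDigit p x n :=
  Int.toNat_of_nonneg (padicDigit_mem_Ico x n).1

lemma padicDigitFin_eq_iff [NeZero p] {x : ℝ} {n : ℕ} {j : Fin p} :
    padicDigitFin p x n = j ↔ padicDigit p x n = (j : ℕ) := by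
  rw [← coe_padicDigitFin, Nat.cast_inj, Fin.ext_iff]

lemma msum_zero_left [NeZero p] (x : ℝ) (n : ℕ) :
    (msum p x 0 n : ℝ) = ∑ i ∈ Finset.range n, ((padicDigitFin p x i : ℕ) : ℝ) := by
  simp only [msum, zero_add, ← coe_padicDigitFin, Int.cast_sum, Int.cast_natCast]

lemma ofDigits_mul_base (w : ℕ → Fin p) :
    Real.ofDigits w * p = (w 0 : ℕ) + Real.ofDigits fun i ↦ w (i + 1) := by
  have hp : (p : ℝ) ≠ 0 := Nat.cast_ne_zero.mpr (Fin.pos (w 0)).ne'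
  rw [Real.ofDigits_eq_sum_add_ofDigits w 1]
  simp only [Finset.sum_range_one, Real.ofDigitsTerm]
  field_simp
  ring

lemma exists_ofDigits_mul_pow_eq (w : ℕ → Fin p) (n : ℕ) :
    ∃ k : ℤ, Real.ofDigits w * (p : ℝ) ^ n = k + Real.ofDigits fun i ↦ w (i + n) := by
  induction n with
  | zero => exact ⟨0, by simp⟩
  | succ n ih =>
    obtain ⟨k, hk⟩ := ih
    refine ⟨k * p + (w n : ℕ), ?_⟩
    rw [pow_succ, ← mul_assoc, hk, add_mul, ofDigits_mul_base]
    simp only [zero_add, add_assoc, add_comm 1 n, Int.cast_add, Int.cast_mul, Int.cast_natCast]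

lemma ofDigits_pos {w : ℕ → Fin p} (hw : ∃ i, (w i : ℕ) ≠ 0) : 0 < Real.ofDigits w := by
  obtain ⟨i, hi⟩ := hw
  have hp : (0 : ℝ) < p := Nat.cast_pos.mpr (Fin.pos (w 0))
  have hwi : (0 : ℝ) < (w i : ℕ) := Nat.cast_pos.mpr (Nat.pos_of_ne_zero hi)
  exact Real.summable_ofDigitsTerm.tsum_pos (fun _ ↦ Real.ofDigitsTerm_nonneg) i
    (mul_pos hwi (by positivity))

lemma padicDigit_ofDigits {w : ℕ → Fin p} (hw : ∃ᶠ i in atTop, (w i : ℕ) ≠ 0) (n : ℕ) :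
    padicDigit p (Real.ofDigits w) n = (w n : ℕ) := by
  have hceil (m : ℕ) (k : ℤ) :
      ⌈(k : ℝ) + Real.ofDigits fun i ↦ w (i + m)⌉ = k + 1 := by
    obtain ⟨i, hi, hwi⟩ := frequently_atTop.mp hw m
    have hpos : 0 < Real.ofDigits fun i ↦ w (i + m) :=
      ofDigits_pos ⟨i - m, by rwa [Nat.sub_add_cancel hi]⟩
    have hle : Real.ofDigits (fun i ↦ w (i + m)) ≤ 1 := Real.ofDigits_le_one _
    have hone : ⌈Real.ofDigits fun i ↦ w (i + m)⌉ = 1 :=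
      Int.ceil_eq_iff.mpr ⟨by simpa using hpos, by simpa using hle⟩
    rw [Int.ceil_intCast_add, hone]
  obtain ⟨k, hk⟩ := exists_ofDigits_mul_pow_eq w n
  have hk' : Real.ofDigits w * (p : ℝ) ^ (n + 1) =
      ((p * k + (w n : ℕ) : ℤ) : ℝ) + Real.ofDigits fun i ↦ w (i + (n + 1)) := by
    rw [pow_succ, ← mul_assoc, hk, add_mul, ofDigits_mul_base]
    push_cast
    simp only [zero_add, add_assoc, add_comm 1 n, mul_comm]
  rw [padicDigit, hk, hk', hceil, hceil]
  ring

end Digits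

section MassDistribution

lemma le_dimH_of_measure_closedEBall_inter_le {X : Type*} [EMetricSpace X] [MeasurableSpace X]
    [BorelSpace X] {μ : Measure X} {F : Set X} {d : ℝ≥0} {C r : ℝ≥0∞} (hF : μ F ≠ 0)
    (hC : C ≠ ∞) (hr : 0 < r)
    (h : ∀ x ∈ F, ∀ ρ, 0 < ρ → ρ ≤ r → μ (Metric.closedEBall x ρ ∩ F) ≤ C * ρ ^ (d : ℝ)) :
    d ≤ dimH F := by
  obtain ⟨ε, hε, hεr⟩ := exists_between hr
  have hle : C⁻¹ • μ.restrict F ≤ μH[d] := by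
    refine Measure.le_hausdorffMeasure _ _ ε hε fun s hs ↦ ?_
    suffices hs' : μ (closure s ∩ F) ≤ C * Metric.ediam s ^ (d : ℝ) by
      calc C⁻¹ * μ.restrict F s
        _ ≤ C⁻¹ * μ.restrict F (closure s) := by gcongr; exact subset_closure
        _ = C⁻¹ * μ (closure s ∩ F) := by rw [Measure.restrict_apply measurableSet_closure]
        _ ≤ C⁻¹ * (C * Metric.ediam s ^ (d : ℝ)) := by gcongr
        _ ≤ Metric.ediam s ^ (d : ℝ) := by
          rw [← mul_assoc]
          exact mul_le_of_le_one_left' (ENNReal.inv_mul_le_one C)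
    obtain hempty | ⟨x, hxs, hxF⟩ := (closure s ∩ F).eq_empty_or_nonempty
    · simp [hempty]
    have hball {ρ : ℝ≥0∞} (hρ : ρ ∈ Ioo (Metric.ediam s) r) :
        μ (closure s ∩ F) ≤ C * ρ ^ (d : ℝ) := by
      refine (measure_mono (inter_subset_inter_left F fun y hy ↦ ?_)).trans
        (h x hxF ρ (bot_le.trans_lt hρ.1) hρ.2.le)
      exact (Metric.edist_le_ediam_of_mem hy hxs).trans
        ((Metric.ediam_closure s).trans_le hρ.1.le)
    have hlim : Tendsto (fun ρ : ℝ≥0∞ ↦ C * ρ ^ (d : ℝ)) (𝓝[>] Metric.ediam s)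
        (𝓝 (C * Metric.ediam s ^ (d : ℝ))) :=
      ENNReal.Tendsto.const_mul
        (ENNReal.continuous_rpow_const.continuousAt.mono_left nhdsWithin_le_nhds) (.inr hC)
    have : (𝓝[>] Metric.ediam s).NeBot := nhdsGT_neBot_of_exists_gt ⟨r, hs.trans_lt hεr⟩
    exact ge_of_tendsto hlim
      (mem_of_superset (Ioo_mem_nhdsGT (hs.trans_lt hεr)) fun ρ hρ ↦ hball hρ)
  refine le_dimH_of_hausdorffMeasure_ne_zero fun hzero ↦ ?_
  have hzero' : C⁻¹ * μ F = 0 := by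
    rw [← Measure.restrict_apply_self]
    exact le_bot_iff.mp ((hle F).trans_eq hzero)
  exact (mul_ne_zero (ENNReal.inv_ne_zero.mpr hC) hF) hzero'

variable {p : ℕ} {μ : Measure ℝ} {F : Set ℝ}

lemma measure_closedEBall_inter_le_of_adicInterval [NeZero p] {n : ℕ} {b : ℝ≥0∞}
    (h : ∀ y ∈ F, μ (adicInterval p n y) ≤ b) (x : ℝ) :
    μ (Metric.closedEBall x (ENNReal.ofReal ((p : ℝ) ^ n)⁻¹) ∩ F) ≤ 3 * b := by
  have hpn : (0 : ℝ) < (p : ℝ) ^ n := pow_pos (Nat.cast_pos.mpr (NeZero.pos p)) n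
  have hpiece (j : ℤ) : μ {y ∈ F | ⌈y * (p : ℝ) ^ n⌉ = j} ≤ b := by
    obtain hempty | ⟨y, hyF, hyj⟩ := {y ∈ F | ⌈y * (p : ℝ) ^ n⌉ = j}.eq_empty_or_nonempty
    · simp [hempty]
    · exact (measure_mono fun z hz ↦ hz.2.trans hyj.symm).trans (h y hyF)
  set k := ⌈x * (p : ℝ) ^ n⌉
  have hcover : Metric.closedEBall x (ENNReal.ofReal ((p : ℝ) ^ n)⁻¹) ∩ F ⊆
      ⋃ j ∈ Finset.Icc (k - 1) (k + 1), {y ∈ F | ⌈y * (p : ℝ) ^ n⌉ = j} := by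
    rintro y ⟨hyx, hyF⟩
    rw [Metric.mem_closedEBall, edist_le_ofReal (inv_nonneg.mpr hpn.le), Real.dist_eq, ← one_div,
      le_div_iff₀ hpn, ← abs_of_pos hpn, ← abs_mul, sub_mul, abs_le] at hyx
    refine mem_biUnion (x := ⌈y * (p : ℝ) ^ n⌉) (Finset.mem_Icc.mpr ⟨?_, ?_⟩) ⟨hyF, rfl⟩
    · rw [← Int.ceil_sub_one]
      exact Int.ceil_le_ceil (by linarith)
    · rw [← Int.ceil_add_one]
      exact Int.ceil_le_ceil (by linarith)
  have hcard : (Finset.Icc (k - 1) (k + 1)).card = 3 := by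
    rw [Int.card_Icc]
    lia
  calc μ (Metric.closedEBall x (ENNReal.ofReal ((p : ℝ) ^ n)⁻¹) ∩ F)
    _ ≤ _ := measure_mono hcover
    _ ≤ ∑ _j ∈ Finset.Icc (k - 1) (k + 1), b :=
      (measure_biUnion_finset_le _ _).trans (Finset.sum_le_sum fun j _ ↦ hpiece j)
    _ = 3 * b := by
      rw [Finset.sum_const, hcard, nsmul_eq_mul, Nat.cast_ofNat]

lemma le_dimH_of_forall_measure_adicInterval_le (hp : 2 ≤ p) {d : ℝ≥0} {N : ℕ} (hF : μ F ≠ 0)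
    (h : ∀ x ∈ F, ∀ n ≥ N,
      μ (adicInterval p n x) ≤ ENNReal.ofReal ((p : ℝ) ^ n)⁻¹ ^ (d : ℝ)) :
    d ≤ dimH F := by
  have : NeZero p := ⟨by lia⟩
  have hp₀ : (0 : ℝ) < p := by positivity
  have hp₁ : (p : ℝ)⁻¹ < 1 := inv_lt_one_of_one_lt₀ (by exact_mod_cast hp)
  refine le_dimH_of_measure_closedEBall_inter_le (C := 3 * (p : ℝ≥0∞) ^ (d : ℝ))
    (r := ENNReal.ofReal ((p : ℝ) ^ N)⁻¹) hF (by finiteness) (by positivity) fun x _ ρ hρ hρN ↦ ?_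
  lift ρ to ℝ≥0 using ne_top_of_le_ne_top ENNReal.ofReal_ne_top hρN
  rw [← ENNReal.ofReal_coe_nnreal, ENNReal.ofReal_le_ofReal_iff (by positivity)] at hρN
  obtain ⟨n, hn, hn'⟩ := exists_nat_pow_near_of_lt_one (NNReal.coe_pos.mpr (ENNReal.coe_pos.mp hρ))
    (hρN.trans (inv_le_one_of_one_le₀ (one_le_pow₀ (Nat.one_le_cast.mpr (NeZero.one_le)))))
    (inv_pos.mpr hp₀) hp₁
  have hNn : N ≤ n := by
    rw [← inv_pow] at hρN
    exact Nat.lt_succ_iff.mp ((pow_lt_pow_iff_right_of_lt_one₀ (inv_pos.mpr hp₀) hp₁).mp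
      (hn.trans_le hρN))
  rw [inv_pow] at hn hn'
  have hscale : ENNReal.ofReal ((p : ℝ) ^ n)⁻¹ ≤ p * ρ := by
    rw [← ENNReal.ofReal_natCast, ← ENNReal.ofReal_coe_nnreal, ← ENNReal.ofReal_mul hp₀.le]
    refine ENNReal.ofReal_le_ofReal ?_
    calc ((p : ℝ) ^ n)⁻¹ = p * ((p : ℝ) ^ (n + 1))⁻¹ := by rw [pow_succ]; field_simp
      _ ≤ p * ρ := by gcongr
  calc μ (Metric.closedEBall x ρ ∩ F)
    _ ≤ μ (Metric.closedEBall x (ENNReal.ofReal ((p : ℝ) ^ n)⁻¹) ∩ F) := by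
      gcongr
      rw [← ENNReal.ofReal_coe_nnreal]
      exact ENNReal.ofReal_le_ofReal hn'
    _ ≤ 3 * ENNReal.ofReal ((p : ℝ) ^ n)⁻¹ ^ (d : ℝ) :=
      measure_closedEBall_inter_le_of_adicInterval (fun y hy ↦ h y hy n hNn) x
    _ ≤ 3 * (p * ρ) ^ (d : ℝ) := by gcongr
    _ = 3 * (p : ℝ≥0∞) ^ (d : ℝ) * ρ ^ (d : ℝ) := by
      rw [ENNReal.mul_rpow_of_nonneg _ _ d.coe_nonneg, mul_assoc]

lemma le_dimH_of_eventually_measure_adicInterval_le (hp : 2 ≤ p) {d : ℝ≥0} (hF : μ F ≠ 0)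
    (h : ∀ x ∈ F, ∀ᶠ n in atTop,
      μ (adicInterval p n x) ≤ ENNReal.ofReal ((p : ℝ) ^ n)⁻¹ ^ (d : ℝ)) :
    d ≤ dimH F := by
  set F' : ℕ → Set ℝ := fun N ↦ {x ∈ F | ∀ n ≥ N,
    μ (adicInterval p n x) ≤ ENNReal.ofReal ((p : ℝ) ^ n)⁻¹ ^ (d : ℝ)}
  have hcover : F ⊆ ⋃ N, F' N := fun x hx ↦
    have ⟨N, hN⟩ := eventually_atTop.mp (h x hx)
    mem_iUnion.mpr ⟨N, hx, hN⟩
  obtain ⟨N, hN⟩ : ∃ N, μ (F' N) ≠ 0 := by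
    by_contra! hnull
    exact hF (measure_mono_null hcover (measure_iUnion_null hnull))
  exact (le_dimH_of_forall_measure_adicInterval_le hp hN fun x hx ↦ hx.2).trans
    (dimH_mono (sep_subset F _))

end MassDistribution

section WordEntropy

variable {p : ℕ} {W W' : ∀ n, Set (Fin n → Fin p)}

/-- The exponential growth rate, in base `p`, of a sequence `W n` of sets of words of length `n`
over the alphabet `Fin p`. -/
def wordEntropy (W : ∀ n, Set (Fin n → Fin p)) : ℝ :=
  limsup (fun n : ℕ ↦ Real.log (Nat.card (W n)) / (n * Real.log p)) atTop

lemma log_card_div_nonneg (W : ∀ n, Set (Fin n → Fin p)) (n : ℕ) :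
    0 ≤ Real.log (Nat.card (W n)) / (n * Real.log p) := by
  positivity

lemma log_card_div_le_one (W : ∀ n, Set (Fin n → Fin p)) (n : ℕ) :
    Real.log (Nat.card (W n)) / (n * Real.log p) ≤ 1 := by
  refine div_le_one_of_le₀ ?_ (by positivity)
  rcases (Nat.card (W n)).eq_zero_or_pos with hW | hW
  · rw [hW, Nat.cast_zero, Real.log_zero]
    positivity
  rw [← Real.log_pow]
  refine Real.log_le_log (Nat.cast_pos.mpr hW) ?_
  rw [← Nat.cast_pow, Nat.cast_le]
  simpa using Finite.card_subtype_le (· ∈ W n)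

lemma isBoundedUnder_log_card_div (W : ∀ n, Set (Fin n → Fin p)) :
    atTop.IsBoundedUnder (· ≤ ·) fun n : ℕ ↦ Real.log (Nat.card (W n)) / (n * Real.log p) :=
  isBoundedUnder_of ⟨1, log_card_div_le_one W⟩

lemma isCoboundedUnder_log_card_div (W : ∀ n, Set (Fin n → Fin p)) :
    atTop.IsCoboundedUnder (· ≤ ·) fun n : ℕ ↦ Real.log (Nat.card (W n)) / (n * Real.log p) :=
  isCoboundedUnder_le_of_le atTop (log_card_div_nonneg W)

lemma wordEntropy_nonneg (W : ∀ n, Set (Fin n → Fin p)) : 0 ≤ wordEntropy W :=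
  le_limsup_of_frequently_le (Frequently.of_forall (log_card_div_nonneg W))
    (isBoundedUnder_log_card_div W)

lemma wordEntropy_mono (h : ∀ n, W n ⊆ W' n) : wordEntropy W ≤ wordEntropy W' := by
  refine limsup_le_limsup (.of_forall fun n ↦ ?_) (isCoboundedUnder_log_card_div W)
    (isBoundedUnder_log_card_div W')
  rcases (Nat.card (W n)).eq_zero_or_pos with hW | hW
  · simpa [hW] using log_card_div_nonneg W' n
  · dsimp only
    gcongr
    exact Nat.card_mono (toFinite _) (h n)

lemma wordEntropy_le_of_card_le_exp {c : ℝ} (hc : 0 ≤ c)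
    (h : ∀ n, (Nat.card (W n) : ℝ) ≤ Real.exp (n * c)) : wordEntropy W ≤ c / Real.log p := by
  refine limsup_le_of_le (isCoboundedUnder_log_card_div W) (.of_forall fun n ↦ ?_)
  have hlog : Real.log (Nat.card (W n)) ≤ n * c := by
    rcases (Nat.card (W n)).eq_zero_or_pos with hW | hW
    · rw [hW, Nat.cast_zero, Real.log_zero]
      positivity
    · exact (Real.log_le_iff_le_exp (Nat.cast_pos.mpr hW)).mpr (h n)
  rcases n.eq_zero_or_pos with rfl | hn
  · simp only [Nat.cast_zero, zero_mul, div_zero]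
    positivity
  calc Real.log (Nat.card (W n)) / (n * Real.log p)
    _ ≤ n * c / (n * Real.log p) := by gcongr
    _ = c / Real.log p := mul_div_mul_left _ _ (by positivity)

lemma eventually_card_le_of_wordEntropy_lt (hp : 2 ≤ p) {s : ℝ} (h : wordEntropy W < s) :
    ∀ᶠ n in atTop, (Nat.card (W n) : ℝ) ≤ ((p : ℝ) ^ n) ^ s := by
  filter_upwards [eventually_lt_of_limsup_lt h (isBoundedUnder_log_card_div W),
    eventually_gt_atTop 0] with n hn hn₀
  have hlog : 0 < Real.log p := Real.log_pos (by exact_mod_cast hp)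
  rw [div_lt_iff₀ (by positivity), ← Real.log_pow, ← Real.log_rpow (by positivity)] at hn
  rcases (Nat.card (W n)).eq_zero_or_pos with hW | hW
  · rw [hW, Nat.cast_zero]
    positivity
  · exact ((Real.log_lt_log_iff (Nat.cast_pos.mpr hW) (by positivity)).mp hn).le

/-- The word `x₁ ⋯ xₙ` of the first `n` digits of the non-terminating `p`-adic expansion of `x`. -/
def digitWord (p : ℕ) [NeZero p] (x : ℝ) (n : ℕ) (i : Fin n) : Fin p :=
  padicDigitFin p x i

lemma sum_digitWord [NeZero p] (x : ℝ) (n : ℕ) :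
    ∑ i, ((digitWord p x n i : ℕ) : ℝ) = msum p x 0 n := by
  rw [msum_zero_left, ← Fin.sum_univ_eq_sum_range fun i ↦ ((padicDigitFin p x i : ℕ) : ℝ)]
  rfl

lemma mem_adicInterval_of_digitWord_eq [NeZero p] {x y : ℝ} {n : ℕ} (hxy : ⌈y⌉ = ⌈x⌉)
    (h : digitWord p y n = digitWord p x n) : y ∈ adicInterval p n x :=
  mem_adicInterval_of_padicDigit_eq hxy fun i hi ↦ by
    rw [← coe_padicDigitFin, ← coe_padicDigitFin]
    exact congrArg (fun j : Fin p ↦ ((j : ℕ) : ℤ)) (congrFun h ⟨i, hi⟩)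

lemma hausdorffMeasure_le_one_of_digitWord_mem (hp : 2 ≤ p) [NeZero p] {s : ℝ≥0}
    (hs : wordEntropy W < s) {E : Set ℝ} {k : ℤ} (hE : ∀ x ∈ E, ⌈x⌉ = k) {N : ℕ}
    (hW : ∀ x ∈ E, ∀ n ≥ N, digitWord p x n ∈ W n) : μH[s] E ≤ 1 := by
  have (n : ℕ) : Fintype (W n) := Fintype.ofFinite _
  have hr : Tendsto (fun n : ℕ ↦ ENNReal.ofReal ((p : ℝ) ^ n)⁻¹) atTop (𝓝 0) := by
    rw [← ENNReal.ofReal_zero]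
    exact ENNReal.tendsto_ofReal
      (tendsto_pow_atTop_atTop_of_one_lt (by exact_mod_cast hp)).inv_tendsto_atTop
  have hdiam (n : ℕ) (w : W n) :
      Metric.ediam {x ∈ E | digitWord p x n = w} ≤ ENNReal.ofReal ((p : ℝ) ^ n)⁻¹ := by
    obtain hempty | ⟨x, hxE, hxw⟩ := {x ∈ E | digitWord p x n = w}.eq_empty_or_nonempty
    · simp [hempty]
    refine (Metric.ediam_mono fun y hy ↦ ?_).trans (ediam_adicInterval_le n x)
    exact mem_adicInterval_of_digitWord_eq ((hE y hy.1).trans (hE x hxE).symm)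
      (hy.2.trans hxw.symm)
  have hcover : ∀ᶠ n in atTop, E ⊆ ⋃ w : W n, {x ∈ E | digitWord p x n = w} := by
    filter_upwards [eventually_ge_atTop N] with n hn x hx
    exact mem_iUnion.mpr ⟨⟨_, hW x hx n hn⟩, hx, rfl⟩
  have hsum : ∀ᶠ n in atTop,
      ∑ w : W n, Metric.ediam {x ∈ E | digitWord p x n = w} ^ (s : ℝ) ≤ 1 := by
    filter_upwards [eventually_card_le_of_wordEntropy_lt hp hs] with n hn
    have hpn : (0 : ℝ) < (p : ℝ) ^ n := by positivity
    calc ∑ w : W n, Metric.ediam {x ∈ E | digitWord p x n = w} ^ (s : ℝ)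
      _ ≤ ∑ _w : W n, ENNReal.ofReal ((p : ℝ) ^ n)⁻¹ ^ (s : ℝ) := by gcongr; exact hdiam n _
      _ = ENNReal.ofReal (Nat.card (W n) * (((p : ℝ) ^ n) ^ (s : ℝ))⁻¹) := by
        rw [Finset.sum_const, Finset.card_univ, nsmul_eq_mul, ← Nat.card_eq_fintype_card,
          ENNReal.ofReal_rpow_of_pos (inv_pos.mpr hpn), Real.inv_rpow hpn.le,
          ENNReal.ofReal_mul (Nat.cast_nonneg _), ENNReal.ofReal_natCast]
      _ ≤ 1 := by
        rw [ENNReal.ofReal_le_one, ← div_eq_mul_inv]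
        exact div_le_one_of_le₀ hn (by positivity)
  calc μH[s] E
    _ ≤ _ := Measure.hausdorffMeasure_le_liminf_sum s E _ hr _ (.of_forall hdiam) hcover
    _ ≤ liminf (fun _ : ℕ ↦ (1 : ℝ≥0∞)) atTop := liminf_le_liminf hsum
    _ = 1 := liminf_const 1

lemma dimH_le_wordEntropy (hp : 2 ≤ p) [NeZero p] {E : Set ℝ}
    (h : ∀ x ∈ E, ∀ᶠ n in atTop, digitWord p x n ∈ W n) :
    dimH E ≤ ENNReal.ofReal (wordEntropy W) := by
  refine le_of_not_gt fun hlt ↦ ?_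
  obtain ⟨s, hs, hsE⟩ := ENNReal.lt_iff_exists_nnreal_btwn.mp hlt
  rw [← ENNReal.ofReal_coe_nnreal,
    ENNReal.ofReal_lt_ofReal_iff_of_nonneg (wordEntropy_nonneg W)] at hs
  have hcover : E ⊆ ⋃ i : ℕ × ℤ, {x ∈ E | ⌈x⌉ = i.2 ∧ ∀ n ≥ i.1, digitWord p x n ∈ W n} :=
    fun x hx ↦
      have ⟨N, hN⟩ := eventually_atTop.mp (h x hx)
      mem_iUnion.mpr ⟨(N, ⌈x⌉), hx, rfl, hN⟩
  refine ((dimH_mono hcover).trans ?_).not_gt hsE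
  rw [dimH_iUnion]
  exact iSup_le fun i ↦ dimH_le_of_hausdorffMeasure_ne_top
    (ne_top_of_le_ne_top ENNReal.one_ne_top
      (hausdorffMeasure_le_one_of_digitWord_mem hp hs (fun x hx ↦ hx.2.1) fun x hx ↦ hx.2.2))

end WordEntropy

section DigitMeans

variable {p : ℕ} {α : ℝ}

lemma entropy_eq_iInf_wordEntropy (p : ℕ) (α : ℝ) :
    entropy p α = ⨅ δ : {δ : ℝ // 0 < δ}, wordEntropy fun n ↦ {w : Fin n → Fin p |
      (n : ℝ) * (α - δ) < ∑ i, ((w i : ℕ) : ℝ) ∧ (∑ i, ((w i : ℕ) : ℝ)) < n * (α + δ)} :=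
  rfl

lemma upperEntropy_eq_iInf_wordEntropy (p : ℕ) (α : ℝ) :
    upperEntropy p α = ⨅ δ : {δ : ℝ // 0 < δ}, wordEntropy fun n ↦
      {w : Fin n → Fin p | (∑ i, ((w i : ℕ) : ℝ)) < n * (α + δ)} :=
  rfl

lemma bddBelow_range_wordEntropy {ι : Type*} (W : ι → ∀ n, Set (Fin n → Fin p)) :
    BddBelow (range fun i ↦ wordEntropy (W i)) :=
  ⟨0, forall_mem_range.mpr fun i ↦ wordEntropy_nonneg (W i)⟩

lemma entropy_le_upperEntropy (p : ℕ) (α : ℝ) : entropy p α ≤ upperEntropy p α := by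
  rw [entropy_eq_iInf_wordEntropy, upperEntropy_eq_iInf_wordEntropy]
  exact ciInf_mono (bddBelow_range_wordEntropy _) fun δ ↦ wordEntropy_mono fun n w hw ↦ hw.2

/-- The set of `x ∈ [0, 1]` whose digit mean `lim Sₙ(x) / n` exists and equals `α`. -/
def digitMeanSet (p : ℕ) (α : ℝ) : Set ℝ :=
  {x ∈ Icc 0 1 | Tendsto (fun n : ℕ ↦ (msum p x 0 n : ℝ) / n) atTop (𝓝 α)}

lemma digitMeanSet_subset_besicovitchUpper {m : ℝ} (h : m ≤ α) :
    digitMeanSet p m ⊆ besicovitchUpper p α :=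
  fun _ hx ↦ ⟨hx.1, hx.2.limsup_eq.trans_le h⟩

lemma isBoundedUnder_msum_div [NeZero p] (x : ℝ) :
    atTop.IsBoundedUnder (· ≤ ·) fun n : ℕ ↦ (msum p x 0 n : ℝ) / n := by
  refine isBoundedUnder_of ⟨p, fun n ↦ div_le_of_le_mul₀ n.cast_nonneg p.cast_nonneg ?_⟩
  rw [msum_zero_left]
  calc ∑ i ∈ Finset.range n, ((padicDigitFin p x i : ℕ) : ℝ)
    _ ≤ ∑ _i ∈ Finset.range n, (p : ℝ) := by gcongr; exact (padicDigitFin p x _).is_le'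
    _ = p * n := by rw [Finset.sum_const, Finset.card_range, nsmul_eq_mul, mul_comm]

lemma dimH_digitMeanSet_le_entropy (hp : 2 ≤ p) (α : ℝ) :
    dimH (digitMeanSet p α) ≤ ENNReal.ofReal (entropy p α) := by
  have : NeZero p := ⟨by lia⟩
  rw [entropy_eq_iInf_wordEntropy, ENNReal.ofReal_iInf]
  refine le_iInf fun δ ↦ dimH_le_wordEntropy hp fun x hx ↦ ?_
  have hIoo : Ioo (α - δ) (α + δ) ∈ 𝓝 α :=
    Ioo_mem_nhds (sub_lt_self α δ.2) (lt_add_of_pos_right α δ.2)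
  filter_upwards [hx.2.eventually_mem hIoo, eventually_gt_atTop 0] with n hn hn₀
  rw [sum_digitWord, ← lt_div_iff₀' (by positivity), ← div_lt_iff₀' (by positivity)]
  exact hn

lemma dimH_besicovitchUpper_le_upperEntropy (hp : 2 ≤ p) (α : ℝ) :
    dimH (besicovitchUpper p α) ≤ ENNReal.ofReal (upperEntropy p α) := by
  have : NeZero p := ⟨by lia⟩
  rw [upperEntropy_eq_iInf_wordEntropy, ENNReal.ofReal_iInf]
  refine le_iInf fun δ ↦ dimH_le_wordEntropy hp fun x hx ↦ ?_
  filter_upwards [eventually_lt_of_limsup_lt (hx.2.trans_lt (lt_add_of_pos_right α δ.2))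
    (isBoundedUnder_msum_div x), eventually_gt_atTop 0] with n hn hn₀
  rwa [sum_digitWord, ← div_lt_iff₀' (by positivity)]

end DigitMeans

section Gibbs

variable {A : Type*} [MeasurableSpace A] [MeasurableSingletonClass A]

lemma mgf_count [Fintype A] (f : A → ℝ) (t : ℝ) : mgf f Measure.count t = ∑ a, Real.exp (t * f a) :=
  integral_count _

lemma exp_cgf_count [Fintype A] [Nonempty A] (f : A → ℝ) (t : ℝ) :
    Real.exp (cgf f Measure.count t) = ∑ a, Real.exp (t * f a) := by
  rw [← mgf_count, exp_cgf .of_finite]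

lemma mem_interior_integrableExpSet_count [Finite A] (f : A → ℝ) (t : ℝ) :
    t ∈ interior (integrableExpSet f Measure.count) := by
  have huniv : integrableExpSet f Measure.count = univ := eq_univ_of_forall fun _ ↦ .of_finite
  simp [huniv]

lemma mgf_count_sum_eq_pow [Finite A] (f : A → ℝ) (n : ℕ) (t : ℝ) :
    mgf (fun w : Fin n → A ↦ ∑ i, f (w i)) Measure.count t = mgf f Measure.count t ^ n := by
  cases nonempty_fintype A
  rw [mgf_count, mgf_count, Fintype.sum_pow]
  simp only [Finset.mul_sum, Real.exp_sum]

lemma card_sum_le_le_exp [Finite A] [Nonempty A] (f : A → ℝ) {t : ℝ} (ht : t ≤ 0) (n : ℕ) (c : ℝ) :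
    (Nat.card {w : Fin n → A | ∑ i, f (w i) ≤ n * c} : ℝ) ≤
      Real.exp (n * (cgf f Measure.count t - t * c)) := by
  calc (Nat.card {w : Fin n → A | ∑ i, f (w i) ≤ n * c} : ℝ)
    _ = Measure.count.real {w : Fin n → A | ∑ i, f (w i) ≤ n * c} := by
      rw [Measure.real, Measure.count_apply_finite _ (toFinite _), ENNReal.toReal_natCast,
        Nat.card_coe_set_eq, ncard_eq_toFinset_card _ (toFinite _)]
    _ ≤ Real.exp (-t * (n * c)) * mgf (fun w : Fin n → A ↦ ∑ i, f (w i)) Measure.count t :=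
      measure_le_le_exp_mul_mgf _ ht .of_finite
    _ = Real.exp (n * (cgf f Measure.count t - t * c)) := by
      rw [mgf_count_sum_eq_pow, ← exp_cgf .of_finite, ← Real.exp_nat_mul, ← Real.exp_add]
      ring_nf

lemma tilted_count_singleton [Finite A] [Nonempty A] (f : A → ℝ) (t : ℝ) (a : A) :
    Measure.count.tilted (t * f ·) {a} =
      ENNReal.ofReal (Real.exp (t * f a - cgf f Measure.count t)) := by
  rw [tilted_mul_apply_cgf _ .of_finite, lintegral_singleton, Measure.count_singleton, mul_one]

end Gibbs

section DigitCgf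

variable {p : ℕ}

/-- The logarithmic generating function `Λ t = log ∑ j < p, exp (t j)` of a digit. -/
def digitCgf (p : ℕ) : ℝ → ℝ :=
  cgf (fun j : Fin p ↦ ((j : ℕ) : ℝ)) Measure.count

lemma exp_digitCgf [NeZero p] (t : ℝ) :
    Real.exp (digitCgf p t) = ∑ j : Fin p, Real.exp (t * (j : ℕ)) :=
  exp_cgf_count _ t

lemma digitCgf_nonneg [NeZero p] (t : ℝ) : 0 ≤ digitCgf p t := by
  rw [← Real.exp_le_exp, Real.exp_zero, exp_digitCgf]
  calc (1 : ℝ) = Real.exp (t * ((0 : Fin p) : ℕ)) := by simp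
    _ ≤ ∑ j : Fin p, Real.exp (t * (j : ℕ)) :=
      Finset.single_le_sum (f := fun j : Fin p ↦ Real.exp (t * (j : ℕ)))
        (fun _ _ ↦ (Real.exp_pos _).le) (Finset.mem_univ 0)

lemma digitCgf_zero (p : ℕ) : digitCgf p 0 = Real.log p := by
  simp [digitCgf, cgf]

lemma tendsto_digitCgf_atBot [NeZero p] : Tendsto (digitCgf p) atBot (𝓝 0) := by
  have hterm (j : Fin p) :
      Tendsto (fun t ↦ Real.exp (t * (j : ℕ))) atBot (𝓝 (if j = 0 then 1 else 0)) := by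
    split_ifs with hj
    · simp [hj]
    · have hj' : (0 : ℝ) < (j : ℕ) := Nat.cast_pos.mpr (Fin.pos_iff_ne_zero.mpr hj)
      exact Real.tendsto_exp_atBot.comp (tendsto_id.atBot_mul_const hj')
  have hsum := tendsto_finsetSum Finset.univ fun j _ ↦ hterm j
  rw [Finset.sum_ite_eq' Finset.univ (0 : Fin p), if_pos (Finset.mem_univ _)] at hsum
  have hlog := hsum.log one_ne_zero
  simp only [← exp_digitCgf, Real.log_exp, Real.log_one] at hlog
  exact hlog

lemma contDiff_digitCgf (p : ℕ) : ContDiff ℝ 1 (digitCgf p) :=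
  contDiff_iff_contDiffAt.mpr fun t ↦
    (analyticAt_cgf (mem_interior_integrableExpSet_count _ t)).contDiffAt

lemma deriv_digitCgf_zero [NeZero p] : deriv (digitCgf p) 0 = ((p : ℝ) - 1) / 2 := by
  have hp : (p : ℝ) ≠ 0 := Nat.cast_ne_zero.mpr (NeZero.ne p)
  have hgauss : (∑ i ∈ Finset.range p, (i : ℝ)) = p * (p - 1) / 2 := by
    have h : (((∑ i ∈ Finset.range p, i) * 2 : ℕ) : ℝ) = (p * (p - 1) : ℕ) := by
      rw [Finset.sum_range_id_mul_two]
    push_cast [Nat.cast_pred (NeZero.pos p)] at h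
    rw [eq_div_iff two_ne_zero, h]
  have hcard : Measure.count.real (univ : Set (Fin p)) = p := by simp [Measure.real]
  rw [digitCgf, deriv_cgf_zero (mem_interior_integrableExpSet_count _ 0), integral_count,
    Fin.sum_univ_eq_sum_range (fun i ↦ (i : ℝ)), hgauss, hcard]
  field_simp

lemma exists_nonpos_deriv_digitCgf_eq [NeZero p] {α : ℝ} (hα : 0 < α)
    (hα' : α ≤ ((p : ℝ) - 1) / 2) : ∃ t ≤ 0, deriv (digitCgf p) t = α := by
  -- `Λ` is nonnegative, so its mean slope over `[s, 0]` is at most `Λ 0 / |s|`.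
  obtain ⟨s, hs₀, hs⟩ : ∃ s < 0, deriv (digitCgf p) s ≤ α := by
    set r := -(Real.log p / α + 1)
    have hr : r < 0 := by
      rw [neg_lt_zero]
      positivity
    obtain ⟨s, hs, hslope⟩ := exists_deriv_eq_slope (digitCgf p) hr
      (contDiff_digitCgf p).continuous.continuousOn
      ((contDiff_digitCgf p).differentiable one_ne_zero).differentiableOn
    refine ⟨s, hs.2, ?_⟩
    rw [hslope, digitCgf_zero, div_le_iff₀ (by linarith)]
    calc Real.log p - digitCgf p r ≤ Real.log p := sub_le_self _ (digitCgf_nonneg r)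
      _ ≤ Real.log p + α := by linarith
      _ = α * (0 - r) := by
        simp only [r]
        field_simp
        ring
  have hcont : ContinuousOn (deriv (digitCgf p)) (Icc s 0) :=
    ((contDiff_digitCgf p).continuous_deriv le_rfl).continuousOn
  obtain ⟨t, ht, htα⟩ := intermediate_value_Icc hs₀.le hcont
    ⟨hs, hα'.trans_eq deriv_digitCgf_zero.symm⟩
  exact ⟨t, ht.2, htα⟩

lemma upperEntropy_le_digitCgf [NeZero p] {α t : ℝ} (hα : 0 ≤ α) (ht : t ≤ 0) :
    upperEntropy p α ≤ (digitCgf p t - t * α) / Real.log p := by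
  have hδ {δ : ℝ} (hδ : 0 < δ) :
      upperEntropy p α ≤ (digitCgf p t - t * (α + δ)) / Real.log p := by
    rw [upperEntropy_eq_iInf_wordEntropy]
    refine (ciInf_le (bddBelow_range_wordEntropy _) ⟨δ, hδ⟩).trans
      (wordEntropy_le_of_card_le_exp ?_ fun n ↦ ?_)
    · have := mul_nonneg (neg_nonneg.mpr ht) (add_nonneg hα hδ.le)
      linarith [digitCgf_nonneg (p := p) t]
    · refine le_trans ?_ (card_sum_le_le_exp (fun j : Fin p ↦ ((j : ℕ) : ℝ)) ht n (α + δ))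
      exact_mod_cast Nat.card_mono (toFinite _) fun w hw ↦ le_of_lt hw.out
  have hlim : Tendsto (fun δ ↦ (digitCgf p t - t * (α + δ)) / Real.log p) (𝓝[>] 0)
      (𝓝 ((digitCgf p t - t * (α + 0)) / Real.log p)) :=
    (Continuous.tendsto (by fun_prop) 0).mono_left nhdsWithin_le_nhds
  rw [add_zero] at hlim
  exact ge_of_tendsto hlim (mem_of_superset self_mem_nhdsWithin fun δ ↦ hδ)

lemma upperEntropy_zero_nonpos [NeZero p] : upperEntropy p 0 ≤ 0 := by
  have hlim : Tendsto (fun t ↦ (digitCgf p t - t * 0) / Real.log p) atBot (𝓝 0) := by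
    simpa using tendsto_digitCgf_atBot.div_const (Real.log p)
  exact ge_of_tendsto hlim ((eventually_le_atBot 0).mono fun t ↦ upperEntropy_le_digitCgf le_rfl)

end DigitCgf

section RandomDigits

lemma ae_tendsto_average_infinitePi {A : Type*} [MeasurableSpace A] (P : Measure A)
    [IsProbabilityMeasure P] {f : A → ℝ} (hf : Measurable f) (hint : Integrable f P) :
    ∀ᵐ w ∂Measure.infinitePi (fun _ : ℕ ↦ P),
      Tendsto (fun n : ℕ ↦ (∑ i ∈ Finset.range n, f (w i)) / n) atTop (𝓝 (∫ a, f a ∂P)) := by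
  have heval (i : ℕ) :
      MeasurePreserving (fun w : ℕ → A ↦ w i) (Measure.infinitePi fun _ ↦ P) P :=
    measurePreserving_eval_infinitePi (fun _ ↦ P) i
  have hmean : ∫ w, f (w 0) ∂Measure.infinitePi (fun _ : ℕ ↦ P) = ∫ a, f a ∂P :=
    (heval 0).hasLaw.integral_comp hf.aestronglyMeasurable
  have hindep : iIndepFun (fun i (w : ℕ → A) ↦ f (w i)) (Measure.infinitePi fun _ : ℕ ↦ P) :=
    iIndepFun_infinitePi (X := fun _ ↦ f) fun _ ↦ hf
  have hident (i : ℕ) : IdentDistrib (fun w : ℕ → A ↦ f (w i)) (fun w ↦ f (w 0))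
      (Measure.infinitePi fun _ : ℕ ↦ P) (Measure.infinitePi fun _ : ℕ ↦ P) :=
    ((heval i).hasLaw.identDistrib (heval 0).hasLaw).comp hf
  have hint₀ : Integrable (fun w : ℕ → A ↦ f (w 0)) (Measure.infinitePi fun _ : ℕ ↦ P) :=
    (heval 0).integrable_comp_of_integrable hint
  rw [← hmean]
  exact strong_law_ae_real _ hint₀ (fun _ _ hij ↦ hindep.indepFun hij) hident

lemma infinitePi_cylinder_eq_prod {A : Type*} [MeasurableSpace A] [MeasurableSingletonClass A]
    (P : Measure A) [IsProbabilityMeasure P] (n : ℕ) (w : ℕ → A) :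
    Measure.infinitePi (fun _ : ℕ ↦ P) {v | ∀ i < n, v i = w i} =
      ∏ i ∈ Finset.range n, P {w i} := by
  have hpi : {v | ∀ i < n, v i = w i} = (Finset.range n : Set ℕ).pi fun i ↦ {w i} := by
    ext v
    simp
  rw [hpi, Measure.infinitePi_pi _ fun i _ ↦ measurableSet_singleton _]

lemma frequently_ne_zero_of_tendsto_average {u : ℕ → ℝ} {m : ℝ} (hm : m ≠ 0)
    (h : Tendsto (fun n : ℕ ↦ (∑ i ∈ Finset.range n, u i) / n) atTop (𝓝 m)) :
    ∃ᶠ i in atTop, u i ≠ 0 := by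
  intro hzero
  have hu : Tendsto u atTop (𝓝 0) :=
    tendsto_const_nhds.congr' (hzero.mono fun i hi ↦ (not_ne_iff.mp hi).symm)
  simp only [div_eq_inv_mul] at h
  exact hm (tendsto_nhds_unique h hu.cesaro)

variable {p : ℕ} {P : Measure (Fin p)} [IsProbabilityMeasure P]

/-- The distribution of the random number `∑ ξᵢ p⁻ⁱ` whose `p`-adic digits `ξᵢ` are independent
with law `P`. -/
def digitLaw (P : Measure (Fin p)) [IsProbabilityMeasure P] : Measure ℝ :=
  (Measure.infinitePi fun _ : ℕ ↦ P).map Real.ofDigits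

lemma ae_frequently_ne_zero (hP : ∫ j, ((j : ℕ) : ℝ) ∂P ≠ 0) :
    ∀ᵐ w ∂Measure.infinitePi (fun _ : ℕ ↦ P), ∃ᶠ i in atTop, (w i : ℕ) ≠ 0 := by
  filter_upwards [ae_tendsto_average_infinitePi P measurable_from_top .of_finite] with w hw
  exact_mod_cast frequently_ne_zero_of_tendsto_average hP hw

lemma padicDigitFin_ofDigits [NeZero p] {w : ℕ → Fin p} (hw : ∃ᶠ i in atTop, (w i : ℕ) ≠ 0)
    (n : ℕ) : padicDigitFin p (Real.ofDigits w) n = w n :=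
  padicDigitFin_eq_iff.mpr (padicDigit_ofDigits hw n)

lemma ofDigits_mem_digitMeanSet [NeZero p] {w : ℕ → Fin p} {m : ℝ} (hm : m ≠ 0)
    (hw : Tendsto (fun n : ℕ ↦ (∑ i ∈ Finset.range n, ((w i : ℕ) : ℝ)) / n) atTop (𝓝 m)) :
    Real.ofDigits w ∈ digitMeanSet p m := by
  have hw₀ : ∃ᶠ i in atTop, (w i : ℕ) ≠ 0 := by
    exact_mod_cast frequently_ne_zero_of_tendsto_average hm hw
  refine ⟨⟨Real.ofDigits_nonneg w, Real.ofDigits_le_one w⟩, ?_⟩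
  simpa only [msum_zero_left, padicDigitFin_ofDigits hw₀] using hw

lemma digitLaw_digitMeanSet_ne_zero [NeZero p] {m : ℝ} (hm : m ≠ 0)
    (hP : ∫ j, ((j : ℕ) : ℝ) ∂P = m) : digitLaw P (digitMeanSet p m) ≠ 0 := by
  have hae : ∀ᵐ w ∂Measure.infinitePi (fun _ : ℕ ↦ P), Real.ofDigits w ∈ digitMeanSet p m := by
    filter_upwards [ae_tendsto_average_infinitePi P measurable_from_top .of_finite] with w hw
    exact ofDigits_mem_digitMeanSet hm (hP ▸ hw)
  intro hzero
  have hnull : Measure.infinitePi (fun _ : ℕ ↦ P) (Real.ofDigits ⁻¹' digitMeanSet p m) = 0 :=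
    le_bot_iff.mp <|
      (Measure.le_map_apply Real.continuous_ofDigits.measurable.aemeasurable _).trans_eq hzero
  obtain ⟨w, hw, hw'⟩ := (hae.and (measure_eq_zero_iff_ae_notMem.mp hnull)).exists
  exact hw' hw

lemma digitLaw_adicInterval_le [NeZero p] (hP : ∫ j, ((j : ℕ) : ℝ) ∂P ≠ 0) (n : ℕ) (x : ℝ) :
    digitLaw P (adicInterval p n x) ≤ ∏ i ∈ Finset.range n, P {padicDigitFin p x i} := by
  rw [digitLaw, Measure.map_apply Real.continuous_ofDigits.measurable
    (measurableSet_adicInterval p n x), ← infinitePi_cylinder_eq_prod]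
  refine measure_mono_ae ?_
  filter_upwards [ae_frequently_ne_zero hP] with w hw hwx i hi
  rw [← padicDigitFin_ofDigits hw, padicDigitFin_eq_iff, coe_padicDigitFin]
  exact padicDigit_eq_of_mem_adicInterval hwx i hi

/-- The Gibbs measure on the alphabet `Fin p`: the digit `j` has probability proportional to
`exp (t j)`. -/
def gibbsMeasure (p : ℕ) (t : ℝ) : Measure (Fin p) :=
  Measure.count.tilted fun j ↦ t * (j : ℕ)

instance [NeZero p] (t : ℝ) : IsProbabilityMeasure (gibbsMeasure p t) :=
  isProbabilityMeasure_tilted .of_finite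

lemma integral_gibbsMeasure (t : ℝ) :
    ∫ j, ((j : ℕ) : ℝ) ∂gibbsMeasure p t = deriv (digitCgf p) t :=
  integral_tilted_mul_self (mem_interior_integrableExpSet_count _ t)

lemma prod_gibbsMeasure_padicDigitFin [NeZero p] (t x : ℝ) (n : ℕ) :
    ∏ i ∈ Finset.range n, gibbsMeasure p t {padicDigitFin p x i} =
      ENNReal.ofReal (Real.exp (t * msum p x 0 n - n * digitCgf p t)) := by
  have hmass (j : Fin p) :
      gibbsMeasure p t {j} = ENNReal.ofReal (Real.exp (t * (j : ℕ) - digitCgf p t)) :=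
    tilted_count_singleton _ t j
  simp only [hmass]
  rw [← ENNReal.ofReal_prod_of_nonneg fun _ _ ↦ (Real.exp_pos _).le, ← Real.exp_sum,
    Finset.sum_sub_distrib, ← Finset.mul_sum, ← msum_zero_left, Finset.sum_const,
    Finset.card_range, nsmul_eq_mul]

lemma le_dimH_digitMeanSet_deriv_digitCgf (hp : 2 ≤ p) {t : ℝ} (hm : deriv (digitCgf p) t ≠ 0) :
    ENNReal.ofReal ((digitCgf p t - t * deriv (digitCgf p) t) / Real.log p) ≤
      dimH (digitMeanSet p (deriv (digitCgf p) t)) := by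
  have : NeZero p := ⟨by lia⟩
  have hlog : 0 < Real.log p := Real.log_pos (by exact_mod_cast hp)
  refine ENNReal.le_of_forall_nnreal_lt fun d hd ↦ ?_
  rw [ENNReal.lt_ofReal_iff_toReal_lt ENNReal.coe_ne_top, ENNReal.coe_toReal,
    lt_div_iff₀ hlog] at hd
  refine le_dimH_of_eventually_measure_adicInterval_le hp
    (digitLaw_digitMeanSet_ne_zero hm (integral_gibbsMeasure t)) fun x hx ↦ ?_
  have hexponent : Tendsto (fun n : ℕ ↦ t * (msum p x 0 n / n) - digitCgf p t) atTop
      (𝓝 (t * deriv (digitCgf p) t - digitCgf p t)) := (hx.2.const_mul t).sub_const _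
  filter_upwards [hexponent.eventually_lt_const (u := -(d * Real.log p)) (by linarith),
    eventually_gt_atTop 0] with n hn hn₀
  have hn' : (0 : ℝ) < n := Nat.cast_pos.mpr hn₀
  calc digitLaw (gibbsMeasure p t) (adicInterval p n x)
    _ ≤ ENNReal.ofReal (Real.exp (t * msum p x 0 n - n * digitCgf p t)) := by
      rw [← prod_gibbsMeasure_padicDigitFin]
      exact digitLaw_adicInterval_le (by rwa [integral_gibbsMeasure]) n x
    _ = ENNReal.ofReal (Real.exp (n * (t * (msum p x 0 n / n) - digitCgf p t))) := by
      rw [mul_sub, mul_left_comm, mul_div_cancel₀ _ hn'.ne']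
    _ ≤ ENNReal.ofReal (Real.exp (n * -(d * Real.log p))) := by gcongr
    _ = ENNReal.ofReal ((p : ℝ) ^ n)⁻¹ ^ (d : ℝ) := by
      rw [ENNReal.ofReal_rpow_of_pos (by positivity), Real.rpow_def_of_pos (by positivity),
        Real.log_inv, Real.log_pow]
      ring_nf

end RandomDigits

section Dimension

variable {p : ℕ} {α : ℝ}

lemma upperEntropy_le_dimH_digitMeanSet (hp : 2 ≤ p) (hα : 0 ≤ α) (hα' : α ≤ ((p : ℝ) - 1) / 2) :
    ENNReal.ofReal (upperEntropy p α) ≤ dimH (digitMeanSet p α) := by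
  have : NeZero p := ⟨by lia⟩
  rcases hα.eq_or_lt with rfl | hα₀
  · exact (ENNReal.ofReal_of_nonpos upperEntropy_zero_nonpos).trans_le zero_le
  obtain ⟨t, ht, rfl⟩ := exists_nonpos_deriv_digitCgf_eq hα₀ hα'
  exact (ENNReal.ofReal_le_ofReal (upperEntropy_le_digitCgf hα ht)).trans
    (le_dimH_digitMeanSet_deriv_digitCgf hp hα₀.ne')

lemma one_le_dimH_digitMeanSet_half (hp : 2 ≤ p) :
    1 ≤ dimH (digitMeanSet p (((p : ℝ) - 1) / 2)) := by
  have : NeZero p := ⟨by lia⟩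
  have hlog : 0 < Real.log p := Real.log_pos (by exact_mod_cast hp)
  have hmean : ((p : ℝ) - 1) / 2 ≠ 0 := by
    have : (2 : ℝ) ≤ p := by exact_mod_cast hp
    linarith
  rw [← deriv_digitCgf_zero] at hmean ⊢
  simpa [digitCgf_zero, hlog.ne'] using le_dimH_digitMeanSet_deriv_digitCgf hp hmean

end Dimension

/-- For an integer `p ≥ 2` and `0 ≤ α ≤ p-1`,
`dim_H Ē(α) = h(α)` if `α < (p-1)/2`, and `dim_H Ē(α) = 1` if `(p-1)/2 ≤ α`. -/
theorem dimH_besicovitchUpper (p : ℕ) (hp : 2 ≤ p) (α : ℝ)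
    (hα : 0 ≤ α) (hα' : α ≤ (p : ℝ) - 1) :
    (α < ((p : ℝ) - 1) / 2 →
      dimH (besicovitchUpper p α) = ENNReal.ofReal (entropy p α)) ∧
    (((p : ℝ) - 1) / 2 ≤ α → dimH (besicovitchUpper p α) = 1) := by
  refine ⟨fun hα₂ ↦ le_antisymm ?_ ?_, fun hα₂ ↦ le_antisymm ?_ ?_⟩
  · calc dimH (besicovitchUpper p α)
      _ ≤ ENNReal.ofReal (upperEntropy p α) := dimH_besicovitchUpper_le_upperEntropy hp α
      _ ≤ dimH (digitMeanSet p α) := upperEntropy_le_dimH_digitMeanSet hp hα hα₂.le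
      _ ≤ ENNReal.ofReal (entropy p α) := dimH_digitMeanSet_le_entropy hp α
  · calc ENNReal.ofReal (entropy p α)
      _ ≤ ENNReal.ofReal (upperEntropy p α) :=
        ENNReal.ofReal_le_ofReal (entropy_le_upperEntropy p α)
      _ ≤ dimH (digitMeanSet p α) := upperEntropy_le_dimH_digitMeanSet hp hα hα₂.le
      _ ≤ dimH (besicovitchUpper p α) := dimH_mono (digitMeanSet_subset_besicovitchUpper le_rfl)
  · exact (dimH_mono (subset_univ _)).trans_eq Real.dimH_univ
  · calc 1 ≤ dimH (digitMeanSet p (((p : ℝ) - 1) / 2)) := one_le_dimH_digitMeanSet_half hp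
      _ ≤ dimH (besicovitchUpper p α) := dimH_mono (digitMeanSet_subset_besicovitchUpper hα₂)
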